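/- (Blackadar's cancellation theorem.) Let A be a simple C*-algebra, and let P be a set of nonzero projections in matrix algebras over A with the following two properties: (1) for every nonzero projection q in a matrix algebra over A, there exist p ∈ P and projections r, s in matrix algebras over A with p ⊕ p ⊕ r ⊕ s ∼ q ⊕ s (that is, 2[p] ≤ [q] in K_0(A)); (2) there is N ∈ ℕ such that tsr(p M_k(A) p) ≤ N for every p ∈ P (with p ∈ M_k(A)). Then projections over A satisfy cancellation: whenever p, q, r are projections in matrix algebras over A with p ⊕ r ∼ q ⊕ r, it follows that p ∼ q. -/

import Mathlib

open scoped Matrix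

/-- Murray–von Neumann equivalence of projections in (possibly different-sized)
matrix algebras over a C*-algebra `A`. -/
def MvNEquiv {A : Type*} [NonUnitalCStarAlgebra A] {m n : Type*} [Fintype m] [Fintype n]
    (p : Matrix m m A) (q : Matrix n n A) : Prop :=
  ∃ v : Matrix m n A, v * vᴴ = p ∧ vᴴ * v = q

/-- `p` is a projection in a matrix algebra over `A`. -/
def IsProjM {A : Type*} [NonUnitalCStarAlgebra A] {m : Type*} [Fintype m]
    (p : Matrix m m A) : Prop :=
  pᴴ = p ∧ p * p = p

/-- `p ≾ q`: `p` is Murray–von Neumann equivalent to a subprojection `q₀` of `q`. -/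
def SubEquiv {A : Type*} [NonUnitalCStarAlgebra A] {m n : Type*} [Fintype m] [Fintype n]
    (p : Matrix m m A) (q : Matrix n n A) : Prop :=
  ∃ q₀ : Matrix n n A, IsProjM q₀ ∧ MvNEquiv p q₀ ∧ q₀ * q = q₀

/-- The block-diagonal direct sum `p ⊕ q` of two matrices over `A`. -/
def dSum {A : Type*} [NonUnitalCStarAlgebra A] {m n : Type*}
    (p : Matrix m m A) (q : Matrix n n A) : Matrix (m ⊕ n) (m ⊕ n) A :=
  Matrix.fromBlocks p 0 0 q

/-- `N * p`: the direct sum of `N` copies of `p`. -/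
def nFold {A : Type*} [NonUnitalCStarAlgebra A] {m : Type*} (N : ℕ)
    (p : Matrix m m A) : Matrix (m × Fin N) (m × Fin N) A :=
  Matrix.blockDiagonal fun _ : Fin N => p

/-- `tsr (r M r) ≤ N` for the corner of a matrix algebra over `A` by the projection `r`:
the `N`-tuples of elements of `r M r` generating `r M r` as a left ideal are dense. -/
def CornerTsrLe {A : Type*} [NonUnitalCStarAlgebra A] {m : Type*} [Fintype m]
    (r : Matrix m m A) (N : ℕ) : Prop :=
  Dense {c : Fin N → {x : Matrix m m A // r * x * r = x} |
    ∃ d : Fin N → {x : Matrix m m A // r * x * r = x},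
      ∑ i, (d i : Matrix m m A) * (c i : Matrix m m A) = r}

/-- A C*-algebra is simple if its only closed two-sided ideals are `0` and the
whole algebra. -/
def IsSimpleCStarAlgebra (A : Type*) [NonUnitalCStarAlgebra A] : Prop :=
  ∀ I : Set A, IsClosed I → (0 : A) ∈ I → (∀ x ∈ I, ∀ y ∈ I, x + y ∈ I) →
    (∀ x ∈ I, -x ∈ I) → (∀ x ∈ I, ∀ a : A, a * x ∈ I) → (∀ x ∈ I, ∀ a : A, x * a ∈ I) →
    I = {0} ∨ I = Set.univ

/-!
Work in the monoid `V(A)` of Murray–von Neumann classes of projections. If `tsr (p M p) ≤ N`, then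
a summand `p` cancels from `p ⊕ N * p ⊕ x ∼ p ⊕ z`: the second copy of `p` is a retract of
`E = p ⊕ N * p ⊕ x`, whose components in `N * p` form an `N`-tuple over the corner `p M p`. After
a small perturbation this tuple generates the corner as a left ideal, and then the retract can be
moved onto the standard copy of `p` by steps which change only its inclusion or only its
projection; each such step preserves the class of the complement. By simplicity every class is
dominated by a multiple of `p`, so any class `y` cancels from `N * p ⊕ x ⊕ y ∼ z ⊕ y`. Finally,
halving `N` times gives, for a nonzero `q`, some `p ∈ P` with `2 ^ N [p] ≤ [q]` in `K₀(A)`. The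
cancellation just obtained turns this into `q ∼ N * p ⊕ x`, and then also yields
cancellation for `q`.
-/

theorem isStrictlyPositive_mul_star_add_one_sub {B : Type*} [CStarAlgebra B] [PartialOrder B]
    [StarOrderedRing B] {r x y : B} (hr : IsStarProjection r) (hxy : x * y = r) :
    IsStrictlyPositive (x * star x + (1 - r)) := by
  set C : ℝ := ‖y * star y‖
  have hC : 0 < 1 + C := by positivity
  have hr_le : r ≤ C • (x * star x) :=
    calc r = x * (y * star y) * star x := by
          rw [← hr.isIdempotentElem.eq]
          nth_rw 2 [← hr.isSelfAdjoint.star_eq]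
          simp only [← hxy, star_mul, mul_assoc]
      _ ≤ C • (x * star x) := CStarAlgebra.star_right_conjugate_le_norm_smul
  have one_le : 1 ≤ (1 + C) • (x * star x + (1 - r)) := by
    rw [← sub_nonneg]
    have hsum : 0 ≤ (C • (x * star x) - r) + x * star x + C • (1 - r) :=
      add_nonneg (add_nonneg (sub_nonneg.2 hr_le) (mul_star_self_nonneg x))
        (smul_nonneg (norm_nonneg _) hr.one_sub.nonneg)
    convert hsum using 1
    module
  have hpos := (isStrictlyPositive_one (A := B)).of_le one_le
  simpa [smul_smul, inv_mul_cancel₀ hC.ne'] using hpos.smul (inv_pos.2 hC)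

-- The normalizer is `h ^ (-1/2)` for `h = x x* + (1 - r)`, which commutes with `r`.
theorem exists_unit_commute_mul_conj_eq {B : Type*} [CStarAlgebra B] {r x y : B}
    (hr : IsStarProjection r) (hrx : r * x = x) (hxy : x * y = r) :
    ∃ s : Bˣ, Commute (s : B) r ∧ s * (x * star x) * star (s : B) = r := by
  let _ : PartialOrder B := CStarAlgebra.spectralOrder B
  have : StarOrderedRing B := CStarAlgebra.spectralOrderedRing B
  set h : B := x * star x + (1 - r) with hh
  have hpos : IsStrictlyPositive h := isStrictlyPositive_mul_star_add_one_sub hr hxy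
  have hxr : star x * r = star x := by simpa [hr.isSelfAdjoint.star_eq] using congrArg star hrx
  have h_mul : h * r = x * star x := by
    rw [hh, add_mul, hr.one_sub_mul_self, add_zero, mul_assoc, hxr]
  have mul_h : r * h = x * star x := by
    rw [hh, mul_add, hr.mul_one_sub_self, add_zero, ← mul_assoc, hrx]
  obtain ⟨s, hs⟩ : IsUnit (h ^ (-(1 / 2) : ℝ)) := hpos.isUnit.cfcRpow _ hpos.nonneg
  have hs_star : star (s : B) = s := by
    rw [hs]; exact CFC.rpow_nonneg.isSelfAdjoint
  have hs_conj : (s : B) * h * s = 1 := by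
    rw [hs]; exact CFC.conjugate_rpow_neg_one_half h
  have hs_comm : Commute (s : B) r := by
    rw [hs, CFC.rpow_def]
    exact Commute.cfc_nnreal (h_mul.trans mul_h.symm) _
  refine ⟨s, hs_comm, ?_⟩
  calc (s : B) * (x * star x) * star (s : B) = s * h * (r * s) := by
        rw [← h_mul, hs_star]; simp only [mul_assoc]
    _ = s * h * s * r := by rw [← hs_comm.eq]; simp only [mul_assoc]
    _ = r := by rw [hs_conj, one_mul]

section NonUnital

variable {D : Type*} [NonUnitalCStarAlgebra D]

theorem unitization_exists_inr_eq_mul (s : Unitization ℂ D) (x : D) :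
    ∃ v : D, (v : Unitization ℂ D) = s * x :=
  ⟨(s * (x : Unitization ℂ D)).snd, by ext <;> simp⟩

theorem exists_corner_mul_conj_eq {r x y : D} (hr : IsStarProjection r) (hrx : r * x = x)
    (hxy : x * y = r) :
    ∃ t t' : D, r * t = t ∧ t' * t = r ∧ t * (x * star x) * star t = r := by
  have hr' : IsStarProjection (r : Unitization ℂ D) :=
    hr.map (Unitization.inrNonUnitalStarAlgHom ℂ D)
  obtain ⟨s, hs_comm, hs⟩ := exists_unit_commute_mul_conj_eq hr'
    (x := (x : Unitization ℂ D)) (y := (y : Unitization ℂ D))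
    (by rw [← Unitization.inr_mul, hrx]) (by rw [← Unitization.inr_mul, hxy])
  obtain ⟨t, ht⟩ := unitization_exists_inr_eq_mul (s : Unitization ℂ D) r
  obtain ⟨t', ht'⟩ := unitization_exists_inr_eq_mul ((s⁻¹ : (Unitization ℂ D)ˣ) : Unitization ℂ D) r
  have hrr := hr'.isIdempotentElem.eq
  refine ⟨t, t', ?_, ?_, ?_⟩ <;> apply Unitization.inr_injective (R := ℂ)
  · rw [Unitization.inr_mul, ht, ← mul_assoc, ← hs_comm.eq, mul_assoc, hrr]
  · rw [Unitization.inr_mul, ht, ht', mul_assoc, ← mul_assoc (r : Unitization ℂ D), ← hs_comm.eq,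
      mul_assoc, hrr, ← mul_assoc, Units.inv_mul, one_mul]
  · have htx : t * x * star (t * x) = t * (x * star x) * star t := by
      simp only [star_mul, mul_assoc]
    have hsx : (↑(t * x) : Unitization ℂ D) = s * x := by
      rw [Unitization.inr_mul, ht, mul_assoc, ← Unitization.inr_mul, hrx]
    rw [← htx, Unitization.inr_mul, Unitization.inr_star, hsx, ← hs]
    simp only [star_mul, mul_assoc]

theorem exists_corner_right_inverse_of_norm_sub_lt_one {p u : D} (hp : p * p = p)
    (hpu : p * u = u) (hup : u * p = u) (hn : ‖u - p‖ < 1) :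
    ∃ e : D, u * e = p ∧ p * e = e ∧ e * p = e := by
  have hn' : ‖((p - u : D) : Unitization ℂ D)‖ < 1 := by
    rwa [Unitization.norm_inr, norm_sub_rev]
  let w := Units.oneSub ((p - u : D) : Unitization ℂ D) hn'
  have hpw : (p : Unitization ℂ D) * w = u := by
    simp only [w, Units.val_oneSub, mul_sub, mul_one, ← Unitization.inr_mul,
      Unitization.inr_sub, hp, hpu, sub_sub_cancel]
  obtain ⟨e, he⟩ := unitization_exists_inr_eq_mul ((w⁻¹ : (Unitization ℂ D)ˣ) : Unitization ℂ D) p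
  have hue : u * e = p := by
    apply Unitization.inr_injective (R := ℂ)
    rw [Unitization.inr_mul, he, ← hpw, mul_assoc, Units.mul_inv_cancel_left,
      ← Unitization.inr_mul, hp]
  have hep : e * p = e := by
    apply Unitization.inr_injective (R := ℂ)
    rw [Unitization.inr_mul, he, mul_assoc, ← Unitization.inr_mul, hp]
  exact ⟨p * e, by rw [← mul_assoc, hup, hue], by rw [← mul_assoc, hp], by rw [mul_assoc, hep]⟩

end NonUnital

section Projections

variable {A : Type*} [NonUnitalCStarAlgebra A]
variable {k l m n : Type*} [Fintype k] [Fintype l] [Fintype m] [Fintype n]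

theorem IsProjM.zero : IsProjM (0 : Matrix m m A) := ⟨by simp, by simp⟩

theorem IsProjM.submatrix {p : Matrix m m A} (hp : IsProjM p) (e : n ≃ m) :
    IsProjM (p.submatrix e e) :=
  ⟨by rw [Matrix.conjTranspose_submatrix, hp.1], by rw [Matrix.submatrix_mul_equiv, hp.2]⟩

theorem IsProjM.dSum {p : Matrix m m A} {q : Matrix n n A} (hp : IsProjM p) (hq : IsProjM q) :
    IsProjM (dSum p q) :=
  ⟨by simp [_root_.dSum, Matrix.fromBlocks_conjTranspose, hp.1, hq.1],
    by simp [_root_.dSum, Matrix.fromBlocks_multiply, hp.2, hq.2]⟩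

theorem IsProjM.nFold {p : Matrix m m A} (hp : IsProjM p) (N : ℕ) : IsProjM (nFold N p) :=
  ⟨by rw [_root_.nFold, Matrix.blockDiagonal_conjTranspose, hp.1],
    by rw [_root_.nFold, ← Matrix.blockDiagonal_mul, hp.2]⟩

theorem IsProjM.sub {p q : Matrix m m A} (hp : IsProjM p) (hq : IsProjM q) (hpq : p * q = p) :
    IsProjM (q - p) := by
  have hqp : q * p = p := by simpa [hp.1, hq.1] using congrArg Matrix.conjTranspose hpq
  exact ⟨by rw [Matrix.conjTranspose_sub, hp.1, hq.1],
    by simp [Matrix.mul_sub, Matrix.sub_mul, hp.2, hq.2, hpq, hqp]⟩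

theorem MvNEquiv.refl {p : Matrix m m A} (hp : IsProjM p) : MvNEquiv p p :=
  ⟨p, by rw [hp.1, hp.2], by rw [hp.1, hp.2]⟩

theorem MvNEquiv.symm {p : Matrix m m A} {q : Matrix n n A} (h : MvNEquiv p q) :
    MvNEquiv q p := by
  obtain ⟨v, hvv, hvv'⟩ := h
  exact ⟨vᴴ, by simpa using hvv', by simpa using hvv⟩

theorem MvNEquiv.trans {p : Matrix m m A} {q : Matrix n n A} {r : Matrix k k A}
    (hp : IsProjM p) (hr : IsProjM r) (hpq : MvNEquiv p q) (hqr : MvNEquiv q r) :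
    MvNEquiv p r := by
  obtain ⟨v, hvp, hvq⟩ := hpq
  obtain ⟨w, hwq, hwr⟩ := hqr
  refine ⟨v * w, ?_, ?_⟩
  · calc v * w * (v * w)ᴴ = v * (w * wᴴ) * vᴴ := by
          simp only [Matrix.conjTranspose_mul, Matrix.mul_assoc]
      _ = (v * vᴴ) * (v * vᴴ) := by rw [hwq, ← hvq]; simp only [Matrix.mul_assoc]
      _ = p := by rw [hvp, hp.2]
  · calc (v * w)ᴴ * (v * w) = wᴴ * (vᴴ * v) * w := by
          simp only [Matrix.conjTranspose_mul, Matrix.mul_assoc]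
      _ = (wᴴ * w) * (wᴴ * w) := by rw [hvq, ← hwq]; simp only [Matrix.mul_assoc]
      _ = r := by rw [hwr, hr.2]

theorem MvNEquiv.submatrix {p : Matrix m m A} (hp : IsProjM p) (e : n ≃ m) :
    MvNEquiv p (p.submatrix e e) := by
  refine ⟨p.submatrix id e, ?_, ?_⟩
  · rw [Matrix.conjTranspose_submatrix, hp.1, Matrix.submatrix_mul_equiv, hp.2,
      Matrix.submatrix_id_id]
  · have hmul := Matrix.submatrix_mul_equiv p p e (Equiv.refl m) e
    rw [hp.2] at hmul
    rwa [Matrix.conjTranspose_submatrix, hp.1]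

theorem MvNEquiv.dSum {p : Matrix m m A} {q : Matrix n n A} {p' : Matrix k k A} {q' : Matrix l l A}
    (hp : MvNEquiv p p') (hq : MvNEquiv q q') : MvNEquiv (dSum p q) (dSum p' q') := by
  obtain ⟨v, hvp, hvp'⟩ := hp
  obtain ⟨w, hwq, hwq'⟩ := hq
  refine ⟨Matrix.fromBlocks v 0 0 w, ?_, ?_⟩
  · simp [_root_.dSum, Matrix.fromBlocks_conjTranspose, Matrix.fromBlocks_multiply, hvp, hwq]
  · simp [_root_.dSum, Matrix.fromBlocks_conjTranspose, Matrix.fromBlocks_multiply, hvp', hwq']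

theorem exists_corner_mul_conjTranspose_eq {r : Matrix m m A} {x : Matrix m n A}
    {y : Matrix n m A} (hr : IsProjM r) (hrx : r * x = x) (hxy : x * y = r) :
    ∃ t t' : Matrix m m A, r * t = t ∧ t' * t = r ∧ t * x * (t * x)ᴴ = r := by
  let _ : PartialOrder A := CStarAlgebra.spectralOrder A
  have : StarOrderedRing A := CStarAlgebra.spectralOrderedRing A
  let R : Matrix (m ⊕ n) (m ⊕ n) A := Matrix.fromBlocks r 0 0 0
  let X : Matrix (m ⊕ n) (m ⊕ n) A := Matrix.fromBlocks 0 x 0 0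
  let Y : Matrix (m ⊕ n) (m ⊕ n) A := Matrix.fromBlocks 0 0 y 0
  have hR : IsProjM R := hr.dSum IsProjM.zero
  have hRX : R * X = X := by simp [R, X, Matrix.fromBlocks_multiply, hrx]
  have hXY : X * Y = R := by simp [X, Y, R, Matrix.fromBlocks_multiply, hxy]
  obtain ⟨T, T', hRT, hT'T, hTX⟩ : ∃ T T' : Matrix (m ⊕ n) (m ⊕ n) A,
      R * T = T ∧ T' * T = R ∧ T * (X * Xᴴ) * Tᴴ = R :=
    exists_corner_mul_conj_eq (D := CStarMatrix (m ⊕ n) (m ⊕ n) A) ⟨hR.2, hR.1⟩ hRX hXY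
  obtain ⟨a, b, c, d, rfl⟩ : ∃ a b c d, T = Matrix.fromBlocks a b c d :=
    ⟨_, _, _, _, (Matrix.fromBlocks_toBlocks T).symm⟩
  obtain ⟨a', b', c', d', rfl⟩ : ∃ a b c d, T' = Matrix.fromBlocks a b c d :=
    ⟨_, _, _, _, (Matrix.fromBlocks_toBlocks T').symm⟩
  simp only [R, X, Matrix.fromBlocks_multiply, Matrix.fromBlocks_conjTranspose,
    Matrix.fromBlocks_inj, Matrix.zero_mul, Matrix.mul_zero, add_zero, zero_add,
    Matrix.conjTranspose_zero] at hRT hT'T hTX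
  obtain ⟨hra, -, rfl, -⟩ := hRT
  refine ⟨a, a', hra, by simpa using hT'T.1, ?_⟩
  simpa only [Matrix.conjTranspose_mul, Matrix.mul_assoc] using hTX.1

theorem mvNEquiv_of_mul_eq {r : Matrix m m A} {q : Matrix n n A} {x : Matrix m n A}
    {y : Matrix n m A} (hr : IsProjM r) (hq : IsProjM q) (hxy : x * y = r) (hyx : y * x = q) :
    MvNEquiv r q := by
  have hrx : r * (x * q) = x * q := by
    rw [← Matrix.mul_assoc, ← hxy, Matrix.mul_assoc x, hyx, Matrix.mul_assoc, hq.2]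
  have hxqy : x * q * y = r := by
    rw [← hyx, ← Matrix.mul_assoc, hxy, Matrix.mul_assoc, hxy, hr.2]
  obtain ⟨t, t', hrt, ht't, hv⟩ := exists_corner_mul_conjTranspose_eq hr hrx hxqy
  set v := t * (x * q) with hv_def
  have hrv : r * v = v := by rw [hv_def, ← Matrix.mul_assoc, hrt]
  have ht'v : t' * v = x * q := by rw [hv_def, ← Matrix.mul_assoc, ht't, hrx]
  have hvq : v * q = v := by simp only [hv_def, Matrix.mul_assoc, hq.2]
  have hxg : x * q * (vᴴ * v) = x * q := by
    rw [← ht'v, Matrix.mul_assoc, ← Matrix.mul_assoc v, hv, hrv]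
  have hqg : q * (vᴴ * v) = q :=
    calc q * (vᴴ * v) = y * (x * q * (vᴴ * v)) := by
          nth_rw 1 [← hq.2, ← hyx]
          simp only [Matrix.mul_assoc]
      _ = q := by rw [hxg, ← Matrix.mul_assoc, hyx, hq.2]
  have hgq : vᴴ * v * q = vᴴ * v := by rw [Matrix.mul_assoc, hvq]
  refine ⟨v, hv, ?_⟩
  have hstar := congrArg Matrix.conjTranspose hqg
  rw [Matrix.conjTranspose_mul, Matrix.conjTranspose_mul, Matrix.conjTranspose_conjTranspose,
    hq.1, hgq] at hstar
  exact hstar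

theorem subEquiv_of_mul_eq {r : Matrix m m A} {Q : Matrix n n A} {x : Matrix m n A}
    {y : Matrix n m A} (hr : IsProjM r) (hrx : r * x = x) (hxQ : x * Q = x) (hxy : x * y = r) :
    SubEquiv r Q := by
  obtain ⟨t, -, hrt, -, hv⟩ := exists_corner_mul_conjTranspose_eq hr hrx hxy
  set v := t * x with hv_def
  have hrv : r * v = v := by rw [hv_def, ← Matrix.mul_assoc, hrt]
  refine ⟨vᴴ * v, ⟨by simp, ?_⟩, ⟨v, hv, rfl⟩, ?_⟩
  · rw [Matrix.mul_assoc, ← Matrix.mul_assoc v, hv, hrv]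
  · rw [Matrix.mul_assoc, hv_def, Matrix.mul_assoc, hxQ]

open scoped Topology in
theorem eventually_exists_corner_right_inverse {p : Matrix n n A} (hp : p * p = p) :
    ∀ᶠ u in 𝓝 p, p * u = u → u * p = u →
      ∃ e : Matrix n n A, u * e = p ∧ p * e = e ∧ e * p = e := by
  let _ : PartialOrder A := CStarAlgebra.spectralOrder A
  have : StarOrderedRing A := CStarAlgebra.spectralOrderedRing A
  have hcont : Continuous (CStarMatrix.ofMatrix : Matrix n n A → CStarMatrix n n A) :=
    CStarMatrix.uniformEmbedding_ofMatrix.uniformContinuous.continuous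
  filter_upwards [hcont.continuousAt.preimage_mem_nhds (Metric.ball_mem_nhds _ one_pos)]
    with u hu hpu hup
  rw [Set.mem_preimage, mem_ball_iff_norm] at hu
  exact exists_corner_right_inverse_of_norm_sub_lt_one (D := CStarMatrix n n A) hp hpu hup hu

end Projections

-- Mathlib states these block products for unital semirings only.
section BlockProducts

variable {R : Type*} [NonUnitalNonAssocSemiring R] {k l m n o : Type*} [Fintype m]

theorem fromCols_mul_fromRows [Fintype n] (a : Matrix k m R) (b : Matrix k n R) (c : Matrix m l R)
    (d : Matrix n l R) : Matrix.fromCols a b * Matrix.fromRows c d = a * c + b * d := by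
  ext
  simp [Matrix.mul_apply]

theorem fromRows_mul (a : Matrix k m R) (b : Matrix l m R) (c : Matrix m o R) :
    Matrix.fromRows a b * c = Matrix.fromRows (a * c) (b * c) := by
  ext (_ | _) <;> simp [Matrix.mul_apply]

theorem mul_fromCols (a : Matrix k m R) (b : Matrix m l R) (c : Matrix m o R) :
    a * Matrix.fromCols b c = Matrix.fromCols (a * b) (a * c) := by
  ext _ (_ | _) <;> simp [Matrix.mul_apply]

theorem fromRows_mul_fromCols (a : Matrix k m R) (b : Matrix l m R) (c : Matrix m o R)
    (d : Matrix m n R) : Matrix.fromRows a b * Matrix.fromCols c d =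
      Matrix.fromBlocks (a * c) (a * d) (b * c) (b * d) := by
  ext (_ | _) (_ | _) <;> simp [Matrix.mul_apply]

theorem fromBlocks_mul_fromRows [Fintype n] (a : Matrix k m R) (b : Matrix k n R)
    (c : Matrix l m R) (d : Matrix l n R) (x : Matrix m o R) (y : Matrix n o R) :
    Matrix.fromBlocks a b c d * Matrix.fromRows x y =
      Matrix.fromRows (a * x + b * y) (c * x + d * y) := by
  ext (_ | _) <;> simp [Matrix.mul_apply]

theorem fromCols_mul_fromBlocks [Fintype n] (x : Matrix o m R) (y : Matrix o n R)
    (a : Matrix m k R) (b : Matrix m l R) (c : Matrix n k R) (d : Matrix n l R) :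
    Matrix.fromCols x y * Matrix.fromBlocks a b c d =
      Matrix.fromCols (x * a + y * c) (x * b + y * d) := by
  ext _ (_ | _) <;> simp [Matrix.mul_apply]

end BlockProducts

section MvNMonoid

variable (A : Type*) [NonUnitalCStarAlgebra A]

/-- Murray–von Neumann equivalence on the projections in the algebras `M_k(A)`, `k ∈ ℕ`. -/
def mvNSetoid : Setoid (Σ k : ℕ, {p : Matrix (Fin k) (Fin k) A // IsProjM p}) where
  r p q := MvNEquiv p.2.1 q.2.1
  iseqv := ⟨fun p => .refl p.2.2, .symm, fun {p _ r} => .trans p.2.2 r.2.2⟩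

/-- The Murray–von Neumann monoid `V(A)` of equivalence classes of projections in matrix algebras
over `A`, added by direct sum. -/
def MvNMonoid : Type _ := Quotient (mvNSetoid A)

variable {A} {m n : Type*} [Fintype m] [Fintype n]

/-- The class `[p]` in `V(A)` of a projection `p`. The index type of `p` may be any finite type;
it is enumerated to land in some `M_k(A)`. -/
noncomputable def mvNClass {p : Matrix m m A} (hp : IsProjM p) : MvNMonoid A :=
  Quotient.mk (mvNSetoid A) ⟨_, _, hp.submatrix (Fintype.equivFin m).symm⟩

theorem mvNClass_eq_iff {p : Matrix m m A} {q : Matrix n n A} {hp : IsProjM p} {hq : IsProjM q} :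
    mvNClass hp = mvNClass hq ↔ MvNEquiv p q := by
  have hp_fin := MvNEquiv.submatrix hp (Fintype.equivFin m).symm
  have hq_fin := MvNEquiv.submatrix hq (Fintype.equivFin n).symm
  refine (Quotient.eq (r := mvNSetoid A)).trans ⟨fun h => ?_, fun h => ?_⟩
  · exact (hp_fin.trans hp (hq.submatrix _) h).trans hp hq hq_fin.symm
  · exact (hp_fin.symm.trans (hp.submatrix _) hq h).trans (hp.submatrix _) (hq.submatrix _) hq_fin

theorem mvNClass_submatrix {p : Matrix m m A} (hp : IsProjM p) (e : n ≃ m) :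
    mvNClass (hp.submatrix e) = mvNClass hp :=
  mvNClass_eq_iff.2 (MvNEquiv.submatrix hp e).symm

theorem MvNMonoid.exists_mvNClass_eq (x : MvNMonoid A) :
    ∃ (k : ℕ) (p : Matrix (Fin k) (Fin k) A) (hp : IsProjM p), mvNClass hp = x := by
  obtain ⟨⟨k, p, hp⟩, rfl⟩ := Quotient.exists_rep x
  exact ⟨k, p, hp, Quotient.sound (MvNEquiv.submatrix hp _).symm⟩

noncomputable instance : Zero (MvNMonoid A) where
  zero := mvNClass (IsProjM.zero (m := Fin 0))

noncomputable instance : Add (MvNMonoid A) where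
  add := Quotient.lift₂ (fun p q => mvNClass (p.2.2.dSum q.2.2))
    fun _ _ _ _ hp hq => mvNClass_eq_iff.2 (MvNEquiv.dSum hp hq)

theorem mvNClass_dSum {p : Matrix m m A} {q : Matrix n n A} (hp : IsProjM p) (hq : IsProjM q) :
    mvNClass (hp.dSum hq) = mvNClass hp + mvNClass hq :=
  mvNClass_eq_iff (hq := (hp.submatrix _).dSum (hq.submatrix _)).2
    ((MvNEquiv.submatrix hp _).dSum (MvNEquiv.submatrix hq _))

theorem mvNClass_eq_zero_iff {p : Matrix m m A} {hp : IsProjM p} : mvNClass hp = 0 ↔ p = 0 := by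
  refine mvNClass_eq_iff.trans ⟨?_, ?_⟩
  · rintro ⟨v, hv, -⟩
    rw [← hv, Subsingleton.elim v 0, Matrix.zero_mul]
  · rintro rfl
    exact ⟨0, by simp, by simp⟩

protected theorem MvNMonoid.add_comm (x y : MvNMonoid A) : x + y = y + x := by
  obtain ⟨_, p, hp, rfl⟩ := x.exists_mvNClass_eq
  obtain ⟨_, q, hq, rfl⟩ := y.exists_mvNClass_eq
  rw [← mvNClass_dSum, ← mvNClass_dSum, ← mvNClass_submatrix _ (Equiv.sumComm _ _)]
  congr 1
  ext (i | i) (j | j) <;> simp [dSum]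

protected theorem MvNMonoid.zero_add (x : MvNMonoid A) : 0 + x = x := by
  obtain ⟨_, p, hp, rfl⟩ := x.exists_mvNClass_eq
  rw [← mvNClass_eq_zero_iff (hp := IsProjM.zero (m := Fin 0)).2 rfl, ← mvNClass_dSum,
    ← mvNClass_submatrix _ (Equiv.emptySum (Fin 0) _).symm]
  congr 1

protected theorem MvNMonoid.add_assoc (x y z : MvNMonoid A) : x + y + z = x + (y + z) := by
  obtain ⟨_, p, hp, rfl⟩ := x.exists_mvNClass_eq
  obtain ⟨_, q, hq, rfl⟩ := y.exists_mvNClass_eq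
  obtain ⟨_, r, hr, rfl⟩ := z.exists_mvNClass_eq
  simp only [← mvNClass_dSum]
  rw [← mvNClass_submatrix _ (Equiv.sumAssoc _ _ _).symm]
  congr 1
  ext (i | i | i) (j | j | j) <;> simp [dSum]

noncomputable instance : AddCommMonoid (MvNMonoid A) where
  add_assoc := MvNMonoid.add_assoc
  zero_add := MvNMonoid.zero_add
  add_zero x := by rw [MvNMonoid.add_comm, MvNMonoid.zero_add]
  add_comm := MvNMonoid.add_comm
  nsmul := nsmulRec

theorem mvNClass_nFold {p : Matrix m m A} (hp : IsProjM p) (N : ℕ) :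
    mvNClass (hp.nFold N) = N • mvNClass hp := by
  induction N with
  | zero =>
    rw [zero_smul, mvNClass_eq_zero_iff]
    ext ⟨_, i⟩
    exact i.elim0
  | succ N ih =>
    let e : m × Fin (N + 1) ≃ (m × Fin N) ⊕ m :=
      ((Equiv.refl m).prodCongr finSumFinEquiv.symm).trans
        ((Equiv.prodSumDistrib m (Fin N) (Fin 1)).trans
          ((Equiv.refl _).sumCongr (Equiv.prodUnique m (Fin 1))))
    rw [succ_nsmul, ← ih, ← mvNClass_dSum, ← mvNClass_submatrix _ e.symm]
    congr 1
    ext (⟨a, i⟩ | a) (⟨b, j⟩ | b) <;>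
      simp [dSum, nFold, e, Matrix.blockDiagonal_apply, Fin.ext_iff,
        fun c : Fin N => c.isLt.ne, fun c : Fin N => c.isLt.ne']

theorem exists_add_mvNClass_eq_of_subEquiv {p : Matrix m m A} {q : Matrix n n A}
    (hp : IsProjM p) (hq : IsProjM q) (h : SubEquiv p q) :
    ∃ w, mvNClass hp + w = mvNClass hq := by
  obtain ⟨q₀, hq₀, hpq₀, hq₀q⟩ := h
  have hqq₀ : q * q₀ = q₀ := by
    simpa [hq.1, hq₀.1] using congrArg Matrix.conjTranspose hq₀q
  refine ⟨mvNClass (hq₀.sub hq hq₀q), ?_⟩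
  rw [(mvNClass_eq_iff (hq := hq₀)).2 hpq₀, ← mvNClass_dSum, eq_comm, mvNClass_eq_iff]
  refine ⟨Matrix.fromCols q₀ (q - q₀), ?_, ?_⟩ <;>
    rw [Matrix.conjTranspose_fromCols_eq_fromRows_conjTranspose, Matrix.conjTranspose_sub,
      hq.1, hq₀.1]
  · rw [fromCols_mul_fromRows, hq₀.2, (hq₀.sub hq hq₀q).2, add_sub_cancel]
  · rw [fromRows_mul_fromCols, hq₀.2, (hq₀.sub hq hq₀q).2, Matrix.mul_sub, Matrix.sub_mul, hq₀.2,
      hq₀q, hqq₀, sub_self, dSum]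

end MvNMonoid

section Retracts

variable {R : Type*} [NonUnitalRing R] {k l m n : Type*} [Fintype m] [Fintype n]

theorem matrix_mul_mul_of_mul_eq {a : Matrix k m R} {b : Matrix m n R} {c : Matrix k n R}
    (h : a * b = c) (x : Matrix n l R) : a * (b * x) = c * x := by
  rw [← Matrix.mul_assoc, h]

variable [Fintype k]

/-- Algebraic (Murray–von Neumann) equivalence of the idempotent matrices `e` and `f`. -/
def IdemEquiv (e : Matrix m m R) (f : Matrix n n R) : Prop :=
  e * e = e ∧ f * f = f ∧ ∃ (x : Matrix m n R) (y : Matrix n m R), x * y = e ∧ y * x = f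

theorem IdemEquiv.symm {e : Matrix m m R} {f : Matrix n n R} (h : IdemEquiv e f) :
    IdemEquiv f e := by
  obtain ⟨he, hf, x, y, hxy, hyx⟩ := h
  exact ⟨hf, he, y, x, hyx, hxy⟩

theorem IdemEquiv.trans {e : Matrix m m R} {f : Matrix n n R} {g : Matrix k k R}
    (hef : IdemEquiv e f) (hfg : IdemEquiv f g) : IdemEquiv e g := by
  obtain ⟨he, -, x, y, hxy, hyx⟩ := hef
  obtain ⟨-, hg, z, w, hzw, hwz⟩ := hfg
  refine ⟨he, hg, x * z, w * y, ?_, ?_⟩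
  · calc x * z * (w * y) = x * (z * w) * y := by simp only [Matrix.mul_assoc]
      _ = (x * y) * (x * y) := by rw [hzw, ← hyx]; simp only [Matrix.mul_assoc]
      _ = e := by rw [hxy, he]
  · calc w * y * (x * z) = w * (y * x) * z := by simp only [Matrix.mul_assoc]
      _ = (w * z) * (w * z) := by rw [hyx, ← hzw]; simp only [Matrix.mul_assoc]
      _ = g := by rw [hwz, hg]

/-- The maps `g : p → E` and `f : E → p` between (the modules defined by) the idempotent matrices
`p` and `E` exhibit `p` as a retract of `E`; its complement in `E` is the idempotent `E - g * f`.
Since `R` need not be unital, the domains and codomains of `f` and `g` are recorded by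
equations. -/
structure IsRetract (E : Matrix m m R) (p : Matrix k k R) (f : Matrix k m R) (g : Matrix m k R) :
    Prop where
  proj_mul : f * E = f
  mul_proj : p * f = f
  mul_incl : E * g = g
  incl_mul : g * p = g
  proj_mul_incl : f * g = p

namespace IsRetract

variable {E : Matrix m m R} {p : Matrix k k R} {q : Matrix n n R}
  {f f' : Matrix k m R} {g g' : Matrix m k R}

theorem mul_self (h : IsRetract E p f g) : p * p = p := by
  nth_rw 2 [← h.proj_mul_incl]
  rw [← Matrix.mul_assoc, h.mul_proj, h.proj_mul_incl]

theorem sub_mul_self (hE : E * E = E) (h : IsRetract E p f g) :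
    (E - g * f) * (E - g * f) = E - g * f := by
  simp only [Matrix.mul_sub, Matrix.sub_mul, Matrix.mul_assoc, hE, h.proj_mul, h.mul_proj,
    matrix_mul_mul_of_mul_eq h.mul_incl, matrix_mul_mul_of_mul_eq h.proj_mul_incl, sub_self,
    sub_zero]

theorem idemEquiv_sub_of_same_incl (hE : E * E = E) (h : IsRetract E p f g)
    (h' : IsRetract E p f' g) : IdemEquiv (E - g * f) (E - g * f') := by
  refine ⟨h.sub_mul_self hE, h'.sub_mul_self hE, E - g * f, E - g * f', ?_, ?_⟩ <;>
    simp only [Matrix.mul_sub, Matrix.sub_mul, Matrix.mul_assoc, hE, h.proj_mul, h.mul_proj,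
      h'.proj_mul, h'.mul_proj, matrix_mul_mul_of_mul_eq h.mul_incl,
      matrix_mul_mul_of_mul_eq h.proj_mul_incl, matrix_mul_mul_of_mul_eq h'.proj_mul_incl,
      sub_self, sub_zero]

theorem idemEquiv_sub_of_same_proj (hE : E * E = E) (h : IsRetract E p f g)
    (h' : IsRetract E p f g') : IdemEquiv (E - g * f) (E - g' * f) := by
  refine ⟨h.sub_mul_self hE, h'.sub_mul_self hE, E - g' * f, E - g * f, ?_, ?_⟩ <;>
    simp only [Matrix.mul_sub, Matrix.sub_mul, Matrix.mul_assoc, hE, h.proj_mul, h.mul_proj,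
      matrix_mul_mul_of_mul_eq h.mul_incl, matrix_mul_mul_of_mul_eq h'.mul_incl,
      matrix_mul_mul_of_mul_eq h.proj_mul_incl, matrix_mul_mul_of_mul_eq h'.proj_mul_incl,
      sub_sub_sub_cancel_right]

theorem idemEquiv_sub_of_add_eq {f' : Matrix n m R} {g' : Matrix m n R} (hE : E * E = E)
    (h : IsRetract E p f g) (h' : IsRetract E q f' g') (hsum : g * f + g' * f' = E) :
    IdemEquiv (E - g * f) q :=
  ⟨h.sub_mul_self hE, h'.mul_self, g', f', eq_sub_of_add_eq' hsum, h'.proj_mul_incl⟩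

theorem trans {f' : Matrix n k R} {g' : Matrix k n R} (h : IsRetract E p f g)
    (h' : IsRetract p q f' g') : IsRetract E q (f' * f) (g * g') where
  proj_mul := by rw [Matrix.mul_assoc, h.proj_mul]
  mul_proj := by rw [← Matrix.mul_assoc, h'.mul_proj]
  mul_incl := by rw [← Matrix.mul_assoc, h.mul_incl]
  incl_mul := by rw [Matrix.mul_assoc, h'.incl_mul]
  proj_mul_incl := by
    rw [Matrix.mul_assoc, matrix_mul_mul_of_mul_eq h.proj_mul_incl, h'.mul_incl,
      h'.proj_mul_incl]

theorem conj {F : Matrix n n R} {x : Matrix n m R} {y : Matrix m n R} (h : IsRetract E p f g)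
    (hxy : x * y = F) (hyx : y * x = E) : IsRetract F p (f * y) (x * g) where
  proj_mul := by
    rw [← hxy, Matrix.mul_assoc, matrix_mul_mul_of_mul_eq hyx, ← Matrix.mul_assoc, h.proj_mul]
  mul_proj := by rw [← Matrix.mul_assoc, h.mul_proj]
  mul_incl := by
    rw [← hxy, Matrix.mul_assoc, matrix_mul_mul_of_mul_eq hyx, h.mul_incl]
  incl_mul := by rw [Matrix.mul_assoc, h.incl_mul]
  proj_mul_incl := by
    rw [Matrix.mul_assoc, matrix_mul_mul_of_mul_eq hyx, h.mul_incl, h.proj_mul_incl]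

theorem fromBlocks_left {p : Matrix m m R} (hp : p * p = p) (q : Matrix n n R) :
    IsRetract (Matrix.fromBlocks p 0 0 q) p (Matrix.fromCols p 0) (Matrix.fromRows p 0) where
  proj_mul := by simp [fromCols_mul_fromBlocks, hp]
  mul_proj := by simp [mul_fromCols, hp]
  mul_incl := by simp [fromBlocks_mul_fromRows, hp]
  incl_mul := by simp [fromRows_mul, hp]
  proj_mul_incl := by simp [fromCols_mul_fromRows, hp]

theorem fromBlocks_right (p : Matrix m m R) {q : Matrix n n R} (hq : q * q = q) :
    IsRetract (Matrix.fromBlocks p 0 0 q) q (Matrix.fromCols 0 q) (Matrix.fromRows 0 q) where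
  proj_mul := by simp [fromCols_mul_fromBlocks, hq]
  mul_proj := by simp [mul_fromCols, hq]
  mul_incl := by simp [fromBlocks_mul_fromRows, hq]
  incl_mul := by simp [fromRows_mul, hq]
  proj_mul_incl := by simp [fromCols_mul_fromRows, hq]

theorem fromBlocks_left_add_right {p : Matrix m m R} {q : Matrix n n R} (hp : p * p = p)
    (hq : q * q = q) :
    Matrix.fromRows p 0 * Matrix.fromCols p 0 + Matrix.fromRows 0 q * Matrix.fromCols 0 q =
      Matrix.fromBlocks p 0 0 q := by
  simp [fromRows_mul_fromCols, Matrix.fromBlocks_add, hp, hq]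

variable {Q : Matrix n n R} {ρ : Matrix n m R} {J : Matrix m n R}

theorem mul_proj_of_mul_mul_eq (h : IsRetract E p f g) (hρJ : IsRetract E Q ρ J)
    {x : Matrix k n R} (hpx : p * x = x) (hxρg : x * (ρ * g) = p) : IsRetract E p (x * ρ) g :=
  { h with
    proj_mul := by rw [Matrix.mul_assoc, hρJ.proj_mul]
    mul_proj := by rw [← Matrix.mul_assoc, hpx]
    proj_mul_incl := by rw [Matrix.mul_assoc, hxρg] }

theorem incl_add_of_proj_mul_eq_zero (h : IsRetract E p f g) (hρJ : IsRetract E Q ρ J)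
    (hfJ : f * J = 0) {y : Matrix n k R} (hyp : y * p = y) : IsRetract E p f (g + J * y) :=
  { h with
    mul_incl := by
      rw [Matrix.mul_add, h.mul_incl, matrix_mul_mul_of_mul_eq hρJ.mul_incl]
    incl_mul := by rw [Matrix.add_mul, Matrix.mul_assoc, h.incl_mul, hyp]
    proj_mul_incl := by
      rw [Matrix.mul_add, h.proj_mul_incl, matrix_mul_mul_of_mul_eq hfJ, Matrix.zero_mul,
        add_zero] }

-- Up to equivalence, the complement does not change along
-- `(f, g) → (f, g₁) → (x * ρ, g₁) → (x * ρ, g₂) → (π, g₂) → (π, i)`,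
-- where `g₁` and `g₂` have the same component `y` in the retract `Q`.
theorem idemEquiv_sub_of_orthogonal {π : Matrix k m R} {i : Matrix m k R} (hE : E * E = E)
    (hfg : IsRetract E p f g) (hπi : IsRetract E p π i) (hρJ : IsRetract E Q ρ J)
    (hρi : ρ * i = 0) (hπJ : π * J = 0) {x : Matrix k n R} {y : Matrix n k R} {e : Matrix k k R}
    (hep : e * p = e) (hpx : p * x = x) (hQy : Q * y = y) (hyp : y * p = y) (hxy : x * y = p)
    (hey : (p - f * J * (ρ * g)) * e + f * J * y = p) :
    IdemEquiv (E - g * f) (E - i * π) := by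
  let g₁ := g * e + J * (y - ρ * g * e)
  let g₂ := i + J * y
  have hρg₁ : ρ * g₁ = y := by
    simp only [g₁, Matrix.mul_add, Matrix.mul_sub, Matrix.mul_assoc,
      matrix_mul_mul_of_mul_eq hρJ.proj_mul_incl, hQy, matrix_mul_mul_of_mul_eq hρJ.mul_proj,
      add_sub_cancel]
  have hρg₂ : ρ * g₂ = y := by
    rw [Matrix.mul_add, hρi, matrix_mul_mul_of_mul_eq hρJ.proj_mul_incl, hQy, zero_add]
  have hfg₁ : IsRetract E p f g₁ :=
    { hfg with
      mul_incl := by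
        simp only [g₁, Matrix.mul_add, matrix_mul_mul_of_mul_eq hfg.mul_incl,
          matrix_mul_mul_of_mul_eq hρJ.mul_incl]
      incl_mul := by simp only [g₁, Matrix.add_mul, Matrix.mul_assoc, Matrix.sub_mul, hep, hyp]
      proj_mul_incl := by
        rw [← hey]
        simp only [g₁, Matrix.mul_add, Matrix.mul_sub, Matrix.sub_mul,
          Matrix.mul_assoc, matrix_mul_mul_of_mul_eq hfg.proj_mul_incl]
        abel }
  have hπg₂ : IsRetract E p π g₂ := hπi.incl_add_of_proj_mul_eq_zero hρJ hπJ hyp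
  have hxg₁ := hfg₁.mul_proj_of_mul_mul_eq hρJ hpx (by rw [hρg₁, hxy])
  have hxg₂ := hπg₂.mul_proj_of_mul_mul_eq hρJ hpx (by rw [hρg₂, hxy])
  exact ((((hfg.idemEquiv_sub_of_same_proj hE hfg₁).trans
    (hfg₁.idemEquiv_sub_of_same_incl hE hxg₁)).trans
    (hxg₁.idemEquiv_sub_of_same_proj hE hxg₂)).trans
    (hxg₂.idemEquiv_sub_of_same_incl hE hπg₂)).trans
    (hπg₂.idemEquiv_sub_of_same_proj hE hπi)

end IsRetract

end Retracts

section Stacking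

variable {R : Type*} [NonUnitalNonAssocSemiring R] {ι l m n : Type*}

/-- The block column with blocks `w i`, indexed compatibly with `nFold`. -/
def blockCol (w : ι → Matrix m n R) : Matrix (m × ι) n R :=
  Matrix.of fun a j => w a.2 a.1 j

/-- The block row with blocks `d i`, indexed compatibly with `nFold`. -/
def blockRow (d : ι → Matrix l m R) : Matrix l (m × ι) R :=
  Matrix.of fun j a => d a.2 j a.1

theorem blockCol_mul [Fintype n] (w : ι → Matrix m n R) (b : Matrix n l R) :
    blockCol w * b = blockCol fun i => w i * b :=
  rfl

theorem blockDiagonal_mul_blockCol [Fintype ι] [DecidableEq ι] [Fintype m]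
    (p : ι → Matrix l m R) (w : ι → Matrix m n R) :
    Matrix.blockDiagonal p * blockCol w = blockCol fun i => p i * w i := by
  ext ⟨a, i⟩ j
  simp [Matrix.mul_apply, Matrix.blockDiagonal_apply, Fintype.sum_prod_type, blockCol]

theorem blockRow_mul_blockCol [Fintype ι] [Fintype m] (d : ι → Matrix l m R)
    (w : ι → Matrix m n R) : blockRow d * blockCol w = ∑ i, d i * w i := by
  ext a j
  simp only [Matrix.mul_apply, Matrix.sum_apply, Fintype.sum_prod_type, blockRow, blockCol,
    Matrix.of_apply]
  exact Finset.sum_comm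

end Stacking

section StableRank

open scoped Topology

variable {A : Type*} [NonUnitalCStarAlgebra A]
variable {k l n : Type*} [Fintype k] [Fintype l] [Fintype n]

theorem CornerTsrLe.frequently_exists_left_inverse {p : Matrix k k A} {N : ℕ}
    (htsr : CornerTsrLe p N) (hp : IsProjM p) {c : Matrix (k × Fin N) k A}
    (hpc : nFold N p * c = c) (hcp : c * p = c) :
    ∃ᶠ β : Matrix (k × Fin N) k A in 𝓝 c,
      nFold N p * β = β ∧ β * p = β ∧ ∃ d : Matrix k (k × Fin N) A, d * β = p := by
  let col (w : Fin N → {x : Matrix k k A // p * x * p = x}) : Matrix (k × Fin N) k A :=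
    blockCol fun i => (w i : Matrix k k A)
  have hcol : Continuous col :=
    continuous_matrix fun a j => Continuous.matrix_elem (by fun_prop) a.1 j
  have hblock (i : Fin N) : p * (Matrix.of fun a j => c (a, i) j) * p =
      Matrix.of fun a j => c (a, i) j := by
    have hpcp : nFold N p * blockCol (fun i => Matrix.of fun a j => c (a, i) j) * p = c := by
      rw [show blockCol (fun i => Matrix.of fun a j => c (a, i) j) = c from rfl, hpc, hcp]
    rw [nFold, blockDiagonal_mul_blockCol, blockCol_mul] at hpcp
    ext a j
    exact congrFun₂ hpcp (a, i) j
  have hunimodular := mem_closure_iff_frequently.1 (htsr fun i => ⟨_, hblock i⟩)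
  refine (hcol.tendsto _).frequently (hunimodular.mono ?_)
  rintro w ⟨d, hd⟩
  refine ⟨?_, ?_, blockRow fun i => (d i : Matrix k k A), ?_⟩
  · rw [nFold, blockDiagonal_mul_blockCol]
    congr! 2 with i
    rw [← (w i).2, ← Matrix.mul_assoc, ← Matrix.mul_assoc, hp.2]
  · rw [blockCol_mul]
    congr! 2 with i
    rw [← (w i).2, Matrix.mul_assoc, hp.2]
  · rw [blockRow_mul_blockCol, hd]

theorem CornerTsrLe.exists_mul_add_mul_eq {p : Matrix k k A} {N : ℕ} (htsr : CornerTsrLe p N)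
    (hp : IsProjM p) {b : Matrix k (k × Fin N) A} {c : Matrix (k × Fin N) k A}
    (hpb : p * b = b) (hpc : nFold N p * c = c) (hcp : c * p = c) :
    ∃ (x : Matrix k (k × Fin N) A) (y : Matrix (k × Fin N) k A) (e : Matrix k k A),
      e * p = e ∧ p * x = x ∧ nFold N p * y = y ∧ y * p = y ∧ x * y = p ∧
        (p - b * c) * e + b * y = p := by
  have hcont : ContinuousAt (fun β => p - b * c + b * β) c := by fun_prop
  have hinv := eventually_exists_corner_right_inverse hp.2
  rw [← sub_add_cancel p (b * c)] at hinv
  obtain ⟨β, ⟨hpβ, hβp, d, hdβ⟩, hβ⟩ :=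
    ((htsr.frequently_exists_left_inverse hp hpc hcp).and_eventually
      (hcont.eventually hinv)).exists
  rw [sub_add_cancel] at hβ
  set u := p - b * c + b * β with hu
  have hpu : p * u = u := by
    simp only [hu, Matrix.mul_add, Matrix.mul_sub, hp.2, matrix_mul_mul_of_mul_eq hpb]
  have hup : u * p = u := by
    simp only [hu, Matrix.add_mul, Matrix.sub_mul, hp.2, Matrix.mul_assoc, hcp, hβp]
  obtain ⟨e, hue, hpe, hep⟩ := hβ hpu hup
  refine ⟨u * d, β * e, e, hep, ?_, ?_, ?_, ?_, ?_⟩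
  · rw [← Matrix.mul_assoc, hpu]
  · rw [← Matrix.mul_assoc, hpβ]
  · rw [Matrix.mul_assoc, hep]
  · rw [Matrix.mul_assoc, matrix_mul_mul_of_mul_eq hdβ, hpe, hue]
  · rw [← Matrix.mul_assoc, ← Matrix.add_mul, ← hu, hue]

theorem CornerTsrLe.idemEquiv_sub_of_isRetract {p : Matrix k k A} {E : Matrix n n A} {N : ℕ}
    (htsr : CornerTsrLe p N) (hp : IsProjM p) (hE : E * E = E) {f π : Matrix k n A}
    {g i : Matrix n k A} {ρ : Matrix (k × Fin N) n A} {J : Matrix n (k × Fin N) A}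
    (hfg : IsRetract E p f g) (hπi : IsRetract E p π i) (hρJ : IsRetract E (nFold N p) ρ J)
    (hρi : ρ * i = 0) (hπJ : π * J = 0) : IdemEquiv (E - g * f) (E - i * π) := by
  obtain ⟨x, y, e, hep, hpx, hQy, hyp, hxy, hey⟩ :=
    htsr.exists_mul_add_mul_eq hp (matrix_mul_mul_of_mul_eq hfg.mul_proj J)
      (matrix_mul_mul_of_mul_eq hρJ.mul_proj g) (by rw [Matrix.mul_assoc, hfg.incl_mul])
  exact hfg.idemEquiv_sub_of_orthogonal hE hπi hρJ hρi hπJ hep hpx hQy hyp hxy hey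

theorem CornerTsrLe.mvNEquiv_of_dSum {p : Matrix k k A} {Y : Matrix l l A} {Z : Matrix n n A}
    {N : ℕ} (htsr : CornerTsrLe p N) (hp : IsProjM p) (hY : IsProjM Y) (hZ : IsProjM Z)
    (h : MvNEquiv (dSum p (dSum (nFold N p) Z)) (dSum p Y)) :
    MvNEquiv (dSum (nFold N p) Z) Y := by
  have hM := (hp.nFold N).dSum hZ
  have hE := hp.dSum hM
  obtain ⟨v, hvE, hvF⟩ := h
  have left_E : IsRetract (dSum p (dSum (nFold N p) Z)) p _ _ := .fromBlocks_left hp.2 _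
  have right_E : IsRetract (dSum p (dSum (nFold N p) Z)) _ _ _ := .fromBlocks_right p hM.2
  have nFold_E := right_E.trans (.fromBlocks_left (hp.nFold N).2 Z)
  have left_F := (IsRetract.fromBlocks_left hp.2 Y).conj hvE hvF
  have right_F := (IsRetract.fromBlocks_right p hY.2).conj hvE hvF
  have left_equiv : IdemEquiv _ _ := htsr.idemEquiv_sub_of_isRetract hp hE.2 left_F left_E nFold_E
    (by simp [Matrix.mul_assoc, fromCols_mul_fromRows])
    (by simp [← Matrix.mul_assoc, fromCols_mul_fromRows])
  have right_E_equiv := left_E.idemEquiv_sub_of_add_eq hE.2 right_E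
    (IsRetract.fromBlocks_left_add_right hp.2 hM.2)
  have right_F_equiv := left_F.idemEquiv_sub_of_add_eq hE.2 right_F <| by
    have hF := IsRetract.fromBlocks_left_add_right hp.2 hY.2
    calc _ = v * dSum p Y * vᴴ := by
          rw [dSum, ← hF]
          simp only [Matrix.mul_add, Matrix.add_mul, Matrix.mul_assoc]
      _ = _ := by rw [← hvF, ← Matrix.mul_assoc, hvE, Matrix.mul_assoc, hvE, hE.2]
  obtain ⟨-, -, x, y, hxy, hyx⟩ := (right_E_equiv.symm.trans left_equiv.symm).trans right_F_equiv
  exact mvNEquiv_of_mul_eq hM hY hxy hyx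

end StableRank

section FactorSubgroup

variable {R : Type*} [NonUnitalRing R] {k l : Type*} [Fintype k]

/-- The finite sums of products `X * p * Y` in `M_l(R)`. For an idempotent `p` this is the
(algebraic) ideal `M_l(I)`, where `I` is the ideal of `R` generated by the entries of `p`. -/
def factorSubgroup (l : Type*) (p : Matrix k k R) : AddSubgroup (Matrix l l R) :=
  .closure {T | ∃ (X : Matrix l k R) (Y : Matrix k l R), X * p * Y = T}

theorem mul_mem_factorSubgroup [Fintype l] {p : Matrix k k R} {T : Matrix l l R}
    (hT : T ∈ factorSubgroup l p) (S : Matrix l l R) : S * T ∈ factorSubgroup l p := by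
  induction hT using AddSubgroup.closure_induction with
  | mem T hT =>
    obtain ⟨X, Y, rfl⟩ := hT
    exact AddSubgroup.subset_closure ⟨S * X, Y, by simp only [Matrix.mul_assoc]⟩
  | zero => rw [Matrix.mul_zero]; exact zero_mem _
  | add T T' _ _ hT hT' => rw [Matrix.mul_add]; exact add_mem hT hT'
  | neg T _ hT => rw [Matrix.mul_neg]; exact neg_mem hT

theorem factorSubgroup_mul_mem [Fintype l] {p : Matrix k k R} {T : Matrix l l R}
    (hT : T ∈ factorSubgroup l p) (S : Matrix l l R) : T * S ∈ factorSubgroup l p := by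
  induction hT using AddSubgroup.closure_induction with
  | mem T hT =>
    obtain ⟨X, Y, rfl⟩ := hT
    exact AddSubgroup.subset_closure ⟨X, Y * S, by simp only [Matrix.mul_assoc]⟩
  | zero => rw [Matrix.zero_mul]; exact zero_mem _
  | add T T' _ _ hT hT' => rw [Matrix.add_mul]; exact add_mem hT hT'
  | neg T _ hT => rw [Matrix.neg_mul]; exact neg_mem hT

theorem exists_mul_blockDiagonal_mul_eq_of_mem_factorSubgroup {p : Matrix k k R} {T : Matrix l l R}
    (hT : T ∈ factorSubgroup l p) :
    ∃ (c : ℕ) (X : Matrix l (k × Fin c) R) (Y : Matrix (k × Fin c) l R),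
      X * (Matrix.blockDiagonal fun _ : Fin c => p) * Y = T := by
  suffices ∃ (c : ℕ) (X : Fin c → Matrix l k R) (Y : Fin c → Matrix k l R),
      ∑ i, X i * (p * Y i) = T by
    obtain ⟨c, X, Y, rfl⟩ := this
    refine ⟨c, blockRow X, blockCol Y, ?_⟩
    rw [Matrix.mul_assoc, blockDiagonal_mul_blockCol, blockRow_mul_blockCol]
  induction hT using AddSubgroup.closure_induction with
  | mem T hT =>
    obtain ⟨X, Y, rfl⟩ := hT
    exact ⟨1, fun _ => X, fun _ => Y, by simp [Matrix.mul_assoc]⟩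
  | zero => exact ⟨0, 0, 0, Fin.sum_univ_zero _⟩
  | add T T' _ _ hT hT' =>
    obtain ⟨c, X, Y, rfl⟩ := hT
    obtain ⟨c', X', Y', rfl⟩ := hT'
    exact ⟨c + c', Fin.append X X', Fin.append Y Y', by simp [Fin.sum_univ_add]⟩
  | neg T _ hT =>
    obtain ⟨c, X, Y, rfl⟩ := hT
    exact ⟨c, -X, Y, by simp⟩

open Classical in
theorem single_entry_mem_factorSubgroup {p : Matrix k k R} (hp : p * p = p) (a b : k) (i j : l) :
    Matrix.single i j (p a b) ∈ factorSubgroup l p := by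
  have hppp : p a b = ∑ x, ∑ y, p a y * p y x * p x b := by
    simp only [← Finset.sum_mul, ← Matrix.mul_apply, hp]
  rw [hppp]
  simp only [← Matrix.singleAddMonoidHom_apply, map_sum]
  refine sum_mem fun x _ => sum_mem fun y _ => AddSubgroup.subset_closure
    ⟨Matrix.single i y (p a y), Matrix.single x j (p x b), ?_⟩
  rw [Matrix.single_mul_mul_single, Matrix.singleAddMonoidHom_apply]

end FactorSubgroup

section Simplicity

open scoped Topology

variable {A : Type*} [NonUnitalCStarAlgebra A]
variable {k l : Type*} [Fintype k]

theorem IsSimpleCStarAlgebra.dense_twoSidedIdeal (hs : IsSimpleCStarAlgebra A)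
    {I : TwoSidedIdeal A} (hI : I ≠ ⊥) : Dense (I : Set A) := by
  refine dense_iff_closure_eq.2 <| (hs (closure I) isClosed_closure (subset_closure I.zero_mem)
    (fun x hx y hy => map_mem_closure₂ continuous_add hx hy fun _ ha _ hb => I.add_mem ha hb)
    (fun x hx => map_mem_closure continuous_neg hx fun _ => I.neg_mem)
    (fun x hx a => map_mem_closure (continuous_const_mul a) hx fun _ => I.mul_mem_left a _)
    (fun x hx a => map_mem_closure (f := (· * a)) (continuous_mul_const a) hx
      fun b => I.mul_mem_right b a)).resolve_left fun hzero => hI ?_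
  rw [eq_bot_iff]
  intro x hx
  rw [TwoSidedIdeal.mem_bot]
  exact hzero.subset (subset_closure hx)

open Classical in
theorem IsSimpleCStarAlgebra.dense_factorSubgroup [Finite l] (hs : IsSimpleCStarAlgebra A)
    {p : Matrix k k A} (hp : p * p = p) (hp0 : p ≠ 0) :
    Dense (factorSubgroup l p : Set (Matrix l l A)) := by
  cases nonempty_fintype l
  let I : TwoSidedIdeal A := .mk' {a | ∀ i j : l, Matrix.single i j a ∈ factorSubgroup l p}
    (fun i j => by rw [Matrix.single_zero]; exact zero_mem _)
    (fun ha hb i j => by rw [Matrix.single_add]; exact add_mem (ha i j) (hb i j))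
    (fun ha i j => by rw [← Matrix.single_neg]; exact neg_mem (ha i j))
    (fun {a b} hb i j => by
      rw [← Matrix.single_mul_single_same _ i i j]; exact mul_mem_factorSubgroup (hb i j) _)
    (fun {a b} ha i j => by
      rw [← Matrix.single_mul_single_same _ i j j]; exact factorSubgroup_mul_mem (ha i j) _)
  have mem_I (a : A) : a ∈ I ↔ ∀ i j : l, Matrix.single i j a ∈ factorSubgroup l p :=
    TwoSidedIdeal.mem_mk' ..
  have hI : I ≠ ⊥ := fun hbot => hp0 <| Matrix.ext fun a b => by
    simpa [hbot] using (mem_I (p a b)).2 (single_entry_mem_factorSubgroup hp a b)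
  have hdense := hs.dense_twoSidedIdeal hI
  refine (dense_pi Set.univ fun _ _ => dense_pi Set.univ fun _ _ => hdense).mono fun T hT => ?_
  rw [Matrix.matrix_eq_sum_single T]
  exact sum_mem fun i _ => sum_mem fun j _ => (mem_I _).1 (hT i trivial j trivial) i j

theorem IsSimpleCStarAlgebra.exists_subEquiv_nFold [Fintype l] (hs : IsSimpleCStarAlgebra A)
    {p : Matrix k k A} (hp : IsProjM p) (hp0 : p ≠ 0) {r : Matrix l l A} (hr : IsProjM r) :
    ∃ c : ℕ, SubEquiv r (nFold c p) := by
  have hcorner : Filter.Tendsto (fun T : Matrix l l A => r * T * r) (𝓝 r) (𝓝 r) :=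
    Continuous.tendsto' (by fun_prop) _ _ (by rw [hr.2, hr.2])
  obtain ⟨T, hT, hTinv⟩ := (mem_closure_iff_frequently.1
    (hs.dense_factorSubgroup hp.2 hp0 r)).and_eventually
      (hcorner.eventually (eventually_exists_corner_right_inverse hr.2)) |>.exists
  obtain ⟨e, he, -, -⟩ := hTinv (by simp only [← Matrix.mul_assoc, hr.2])
    (by simp only [Matrix.mul_assoc, hr.2])
  obtain ⟨c, X, Y, rfl⟩ := exists_mul_blockDiagonal_mul_eq_of_mem_factorSubgroup hT
  refine ⟨c, subEquiv_of_mul_eq hr (x := r * X * nFold c p) (y := Y * r * e) ?_ ?_ ?_⟩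
  · simp only [← Matrix.mul_assoc, hr.2]
  · rw [Matrix.mul_assoc, (hp.nFold c).2]
  · simpa only [nFold, Matrix.mul_assoc] using he

end Simplicity

section CancellationInMonoids

variable {V : Type*} [AddCommMonoid V]

theorem nsmul_add_cancel_nsmul {p : V} {N : ℕ}
    (hcancel : ∀ x z, p + (N • p + x) = p + z → N • p + x = z) (c : ℕ) {x z : V}
    (h : c • p + (N • p + x) = c • p + z) : N • p + x = z := by
  induction c with
  | zero => simpa using h
  | succ c ih =>
    apply ih
    rw [add_left_comm]
    apply hcancel
    calc p + (N • p + (c • p + x)) = (c + 1) • p + (N • p + x) := by rw [succ_nsmul]; abel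
      _ = p + (c • p + z) := by rw [h, succ_nsmul]; abel

theorem nsmul_add_cancel {p : V} {N : ℕ}
    (hcancel : ∀ x z, p + (N • p + x) = p + z → N • p + x = z)
    (hdom : ∀ y, ∃ (c : ℕ) (w : V), y + w = c • p) {x y z : V}
    (h : N • p + x + y = z + y) : N • p + x = z := by
  obtain ⟨c, w, hw⟩ := hdom y
  apply nsmul_add_cancel_nsmul hcancel c
  calc c • p + (N • p + x) = N • p + x + y + w := by rw [← hw]; abel
    _ = c • p + z := by rw [h, ← hw]; abel

theorem exists_two_pow_nsmul_add_eq {S : Set V} (hS : 0 ∉ S)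
    (hhalf : ∀ q ≠ 0, ∃ p ∈ S, ∃ r s, 2 • p + r + s = q + s) (n : ℕ) {q : V} (hq : q ≠ 0) :
    ∃ p ∈ S, ∃ r s, 2 ^ n • p + r + s = q + s := by
  induction n with
  | zero =>
    obtain ⟨p, hp, r, s, h⟩ := hhalf q hq
    exact ⟨p, hp, p + r, s, by rw [← h, two_nsmul, pow_zero, one_nsmul, add_assoc p p r]⟩
  | succ n ih =>
    obtain ⟨p, hp, r, s, h⟩ := ih
    obtain ⟨p', hp', r', s', h'⟩ := hhalf p (ne_of_mem_of_not_mem hp hS)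
    refine ⟨p', hp', 2 ^ n • r' + r, 2 ^ n • s' + s, ?_⟩
    calc 2 ^ (n + 1) • p' + (2 ^ n • r' + r) + (2 ^ n • s' + s)
        = 2 ^ n • (2 • p' + r' + s') + r + s := by
          rw [pow_succ, mul_nsmul', nsmul_add, nsmul_add]; abel
      _ = 2 ^ n • p + r + s + 2 ^ n • s' := by rw [h', nsmul_add]; abel
      _ = q + (2 ^ n • s' + s) := by rw [h]; abel

theorem isCancelAdd_of_two_nsmul_le {S : Set V} (hS : 0 ∉ S) {N : ℕ}
    (hcancel : ∀ p ∈ S, ∀ x z, p + (N • p + x) = p + z → N • p + x = z)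
    (hdom : ∀ p ∈ S, ∀ y, ∃ (c : ℕ) (w : V), y + w = c • p)
    (hhalf : ∀ q ≠ 0, ∃ p ∈ S, ∃ r s, 2 • p + r + s = q + s) : IsCancelAdd V := by
  have cancel_of_ne_zero {q z r : V} (hq : q ≠ 0) (h : q + r = z + r) : q = z := by
    obtain ⟨p, hp, x, s, hx⟩ := exists_two_pow_nsmul_add_eq hS hhalf N hq
    obtain ⟨d, hd⟩ := Nat.exists_eq_add_of_le (Nat.lt_two_pow_self (n := N)).le
    rw [hd, add_nsmul, add_assoc (N • p)] at hx
    have hq_eq := nsmul_add_cancel (hcancel p hp) (hdom p hp) hx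
    rw [← hq_eq] at h ⊢
    exact nsmul_add_cancel (hcancel p hp) (hdom p hp) h
  have : IsRightCancelAdd V := ⟨fun r q z h => by
    by_cases hq : q = 0
    · by_cases hz : z = 0
      · rw [hq, hz]
      · exact (cancel_of_ne_zero hz h.symm).symm
    · exact cancel_of_ne_zero hq h⟩
  exact AddCommMagma.IsRightCancelAdd.toIsCancelAdd V

end CancellationInMonoids

section Classes

variable {A : Type*} [NonUnitalCStarAlgebra A] {k : Type*} [Fintype k]

theorem CornerTsrLe.nsmul_mvNClass_add_eq {p : Matrix k k A} {N : ℕ} (htsr : CornerTsrLe p N)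
    (hp : IsProjM p) {x z : MvNMonoid A}
    (h : mvNClass hp + (N • mvNClass hp + x) = mvNClass hp + z) : N • mvNClass hp + x = z := by
  obtain ⟨_, X, hX, rfl⟩ := x.exists_mvNClass_eq
  obtain ⟨_, Z, hZ, rfl⟩ := z.exists_mvNClass_eq
  simp only [← mvNClass_nFold, ← mvNClass_dSum, mvNClass_eq_iff] at h ⊢
  exact htsr.mvNEquiv_of_dSum hp hZ hX h

theorem IsSimpleCStarAlgebra.exists_add_eq_nsmul_mvNClass (hs : IsSimpleCStarAlgebra A)
    {p : Matrix k k A} (hp : IsProjM p) (hp0 : p ≠ 0) (y : MvNMonoid A) :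
    ∃ (c : ℕ) (w : MvNMonoid A), y + w = c • mvNClass hp := by
  obtain ⟨_, r, hr, rfl⟩ := y.exists_mvNClass_eq
  obtain ⟨c, hc⟩ := hs.exists_subEquiv_nFold hp hp0 hr
  refine ⟨c, ?_⟩
  rw [← mvNClass_nFold]
  exact exists_add_mvNClass_eq_of_subEquiv hr (hp.nFold c) hc

end Classes

/-- Blackadar's cancellation theorem: if `A` is a simple C*-algebra and `P` is a set of
nonzero projections in matrix algebras over `A` such that (1) every nonzero projection
`q` over `A` satisfies `2 [p] ≤ [q]` in `K₀ (A)` for some `p ∈ P`, and (2) the corners by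
elements of `P` have uniformly bounded topological stable rank, then projections over `A`
satisfy cancellation. -/
theorem mvNEquiv_cancellation {A : Type*} [NonUnitalCStarAlgebra A]
    (hsimple : IsSimpleCStarAlgebra A)
    (P : Set (Σ k : ℕ, Matrix (Fin k) (Fin k) A))
    (hP : ∀ p ∈ P, IsProjM p.2 ∧ p.2 ≠ 0)
    (hsmall : ∀ (l : ℕ) (q : Matrix (Fin l) (Fin l) A), IsProjM q → q ≠ 0 →
      ∃ p ∈ P, ∃ (kr ks : ℕ) (r : Matrix (Fin kr) (Fin kr) A)
        (s : Matrix (Fin ks) (Fin ks) A), IsProjM r ∧ IsProjM s ∧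
        MvNEquiv (dSum (dSum (dSum p.2 p.2) r) s) (dSum q s))
    (N : ℕ) (htsr : ∀ p ∈ P, CornerTsrLe p.2 N)
    {a b c : ℕ}
    (p : Matrix (Fin a) (Fin a) A) (q : Matrix (Fin b) (Fin b) A)
    (r : Matrix (Fin c) (Fin c) A)
    (hp : IsProjM p) (hq : IsProjM q) (hr : IsProjM r)
    (hsum : MvNEquiv (dSum p r) (dSum q r)) :
    MvNEquiv p q := by
  have hcancel : IsCancelAdd (MvNMonoid A) := by
    refine isCancelAdd_of_two_nsmul_le (S := {x | ∃ p ∈ P, ∃ hp : IsProjM p.2, mvNClass hp = x})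
      (N := N) ?_ ?_ ?_ ?_
    · rintro ⟨p, hpP, hp, h⟩
      exact (hP p hpP).2 (mvNClass_eq_zero_iff.1 h)
    · rintro _ ⟨p, hpP, hp, rfl⟩ x z h
      exact (htsr p hpP).nsmul_mvNClass_add_eq hp h
    · rintro _ ⟨p, hpP, hp, rfl⟩
      exact hsimple.exists_add_eq_nsmul_mvNClass hp (hP p hpP).2
    · intro x hx
      obtain ⟨l, q, hq, rfl⟩ := x.exists_mvNClass_eq
      obtain ⟨p, hpP, _, _, r, s, hr, hs, h⟩ := hsmall l q hq (mt mvNClass_eq_zero_iff.2 hx)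
      have hp := (hP p hpP).1
      refine ⟨_, ⟨p, hpP, hp, rfl⟩, mvNClass hr, mvNClass hs, ?_⟩
      simpa only [two_nsmul, ← mvNClass_dSum, mvNClass_eq_iff] using h
  have hclass : mvNClass hp + mvNClass hr = mvNClass hq + mvNClass hr := by
    simpa only [← mvNClass_dSum, mvNClass_eq_iff] using hsum
  exact mvNClass_eq_iff.1 (add_right_cancel hclass)
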